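/- Let R be a local complete intersection ring and M, N finitely generated R-modules with M maximal Cohen-Macaulay. If Tor_i^R(M,N) = 0 for all sufficiently large i, then Tor_i^R(M,N) = 0 for all i ≥ 1. -/

import Mathlib

open RingTheory.Sequence CategoryTheory

universe u

noncomputable section

/-- Depth of a module: supremum of lengths of weakly regular sequences consisting of nonunits.
For a f.g. module over a noetherian local ring this is the usual depth, and the zero module
has depth `⊤`. -/
def rdepth (A : Type u) [CommRing A] (M : Type u) [AddCommGroup M] [Module A M] : ℕ∞ :=
  sSup {n : ℕ∞ | ∃ rs : List A, (rs.length : ℕ∞) = n ∧ (∀ r ∈ rs, r ∈ nonunits A) ∧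
    RingTheory.Sequence.IsWeaklyRegular M rs}

/-- Serre's condition `(S_n)`. -/
def SerreCond (R : Type u) [CommRing R] (M : Type u) [AddCommGroup M] [Module R M] (n : ℕ) :
    Prop :=
  ∀ (p : Ideal R) (hp : p.IsPrime), Nontrivial (LocalizedModule p.primeCompl M) →
    min (n : ℕ∞) (Order.height (⟨p, hp⟩ : PrimeSpectrum R)) ≤
      rdepth (Localization.AtPrime p) (LocalizedModule p.primeCompl M)

/-- `Tor_i^R(M, N)` as an object of `ModuleCat R`. -/
def TorModCat (R : Type u) [CommRing R] (i : ℕ) (M N : Type u) [AddCommGroup M] [Module R M]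
    [AddCommGroup N] [Module R N] : ModuleCat.{u} R :=
  ((Tor (ModuleCat.{u} R) i).obj (ModuleCat.of R M)).obj (ModuleCat.of R N)

/-- `Tor_i^R(M, N)` as a type (with its `R`-module structure given by instances below). -/
def TorM (R : Type u) [CommRing R] (i : ℕ) (M N : Type u) [AddCommGroup M] [Module R M]
    [AddCommGroup N] [Module R N] : Type u :=
  TorModCat R i M N

instance (R : Type u) [CommRing R] (i : ℕ) (M N : Type u) [AddCommGroup M] [Module R M]
    [AddCommGroup N] [Module R N] : AddCommGroup (TorM R i M N) :=
  inferInstanceAs (AddCommGroup (TorModCat R i M N))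

instance (R : Type u) [CommRing R] (i : ℕ) (M N : Type u) [AddCommGroup M] [Module R M]
    [AddCommGroup N] [Module R N] : Module R (TorM R i M N) :=
  inferInstanceAs (Module R (TorModCat R i M N))

/-- A regular local ring: noetherian local, whose maximal ideal is generated by a
(weakly) regular sequence. -/
def IsRegLocal (Q : Type u) [CommRing Q] : Prop :=
  IsNoetherianRing Q ∧ IsLocalRing Q ∧
    ∃ rs : List Q, RingTheory.Sequence.IsWeaklyRegular Q rs ∧ (∀ r ∈ rs, r ∈ nonunits Q) ∧
      Ideal.span {x | x ∈ rs} = Ideal.span (nonunits Q)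

/-- A (local) complete intersection: noetherian local ring whose completion is a regular
local ring modulo a regular sequence (of nonunits). -/
def IsCIRing (R : Type u) [CommRing R] : Prop :=
  IsNoetherianRing R ∧ IsLocalRing R ∧
    ∃ (Q : Type u) (_ : CommRing Q), IsRegLocal Q ∧
      ∃ rs : List Q, (∀ r ∈ rs, r ∈ nonunits Q) ∧ RingTheory.Sequence.IsWeaklyRegular Q rs ∧
        Nonempty ((Q ⧸ Ideal.span {x | x ∈ rs}) ≃+* AdicCompletion (Ideal.span (nonunits R)) R)

/-- A hypersurface: noetherian local ring whose completion is a regular local ring modulo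
a single non-zerodivisor in the maximal ideal. -/
def IsHypersurfaceRing (R : Type u) [CommRing R] : Prop :=
  IsNoetherianRing R ∧ IsLocalRing R ∧
    ∃ (Q : Type u) (_ : CommRing Q), IsRegLocal Q ∧
      ∃ f : Q, f ∈ nonunits Q ∧ f ∈ nonZeroDivisors Q ∧
        Nonempty ((Q ⧸ Ideal.span {f}) ≃+* AdicCompletion (Ideal.span (nonunits R)) R)

/-- Maximal Cohen-Macaulay module over a local ring: depth equals the Krull dimension. -/
def IsMCM (R : Type u) [CommRing R] (M : Type u) [AddCommGroup M] [Module R M] : Prop :=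
  (rdepth R M : WithBot ℕ∞) = ringKrullDim R

/-- Cohen-Macaulay local ring. -/
def IsCMLocalRing (A : Type u) [CommRing A] : Prop :=
  IsNoetherianRing A ∧ IsLocalRing A ∧ (rdepth A A : WithBot ℕ∞) = ringKrullDim A

/-- `M` has (constant) rank: free of the same rank at every minimal prime. -/
def HasRank (R : Type u) [CommRing R] (M : Type u) [AddCommGroup M] [Module R M] : Prop :=
  ∃ r : ℕ, ∀ (p : Ideal R) (hp : p.IsPrime), p ∈ minimalPrimes R →
    Nonempty ((LocalizedModule (@Ideal.primeCompl R _ p hp) M)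
      ≃ₗ[Localization (@Ideal.primeCompl R _ p hp)]
      (Fin r → Localization (@Ideal.primeCompl R _ p hp)))

/-- Projective dimension at most `n`. -/
def pdLE (R : Type u) [CommRing R] : ℕ → ∀ (M : Type u) [AddCommGroup M] [Module R M], Prop
  | 0, M, _, _ => Module.Projective R M
  | n+1, M, _, _ => ∃ (P : Type u) (_ : AddCommGroup P) (_ : Module R P),
      Module.Projective R P ∧ ∃ f : P →ₗ[R] M, Function.Surjective f ∧
        pdLE R n (LinearMap.ker f)

/-- Injective dimension at most `n`. -/
def idLE (R : Type u) [CommRing R] : ℕ → ∀ (M : Type u) [AddCommGroup M] [Module R M], Prop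
  | 0, M, _, _ => Module.Injective R M
  | n+1, M, _, _ => ∃ (I : Type u) (_ : AddCommGroup I) (_ : Module R I),
      Module.Injective R I ∧ ∃ f : M →ₗ[R] I, Function.Injective f ∧
        idLE R n (I ⧸ LinearMap.range f)

/-- Gorenstein local ring: noetherian local with finite self-injective dimension. -/
def IsGorensteinLocalRing (R : Type u) [CommRing R] : Prop :=
  IsNoetherianRing R ∧ IsLocalRing R ∧ ∃ n : ℕ, idLE R n R

/-- The map `M → R^ν` obtained from a free cover `ε : R^ν ↠ M^*` by dualizing and composing
with the biduality map; its cokernel is the pushforward `M₁`. -/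
def pushMap (R M : Type u) [CommRing R] [AddCommGroup M] [Module R M] {ν : ℕ}
    (ε : (Fin ν → R) →ₗ[R] Module.Dual R M) : M →ₗ[R] (Fin ν → R) where
  toFun m := fun i => ε (Pi.single i 1) m
  map_add' x y := by funext i; simp
  map_smul' r x := by funext i; simp

/-- Length of a module, as the Krull dimension of its lattice of submodules. -/
def mlen (R : Type u) [CommRing R] (M : Type u) [AddCommGroup M] [Module R M] :
    WithBot ℕ∞ :=
  Order.krullDim (Submodule R M)

/-- An unramified regular local ring: equicharacteristic (contains a field), or of mixed
characteristic `(0, p)` with `p` not in the square of the maximal ideal. -/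
def IsUnramifiedRegLocal (Q : Type u) [CommRing Q] : Prop :=
  IsRegLocal Q ∧
    ((∃ (K : Type u) (_ : Field K), Nonempty (K →+* Q)) ∨
     (CharZero Q ∧ ∃ p : ℕ, p.Prime ∧ (p : Q) ∈ nonunits Q ∧
        (p : Q) ∉ (Ideal.span (nonunits Q)) ^ 2))

open Function TensorProduct in
theorem rTensor_inj_of_lTensor_inj' {R : Type*} [CommRing R]
    {M₁ M₂ M₃ N₁ N₂ N₃ : Type*}
    [AddCommGroup M₁] [Module R M₁] [AddCommGroup M₂] [Module R M₂] [AddCommGroup M₃] [Module R M₃]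
    [AddCommGroup N₁] [Module R N₁] [AddCommGroup N₂] [Module R N₂] [AddCommGroup N₃] [Module R N₃]
    {f₁ : M₁ →ₗ[R] M₂} {f₂ : M₂ →ₗ[R] M₃} {g₁ : N₁ →ₗ[R] N₂} {g₂ : N₂ →ₗ[R] N₃}
    (hfexact : Exact f₁ f₂) (hfsurj : Surjective f₂)
    (hgexact : Exact g₁ g₂) (hgsurj : Surjective g₂)
    (hfinj : Injective (g₁.lTensor M₃)) (hginj : Injective (f₁.rTensor N₂)) :
    Injective (f₁.rTensor N₃) := by
  rw [← LinearMap.lTensor_inj_iff_rTensor_inj]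
  rw [← LinearMap.lTensor_inj_iff_rTensor_inj] at hginj
  rw [LinearMap.lTensor_inj_iff_rTensor_inj] at hfinj
  exact lTensor_injective_of_exact_of_exact_of_rTensor_injective hgexact hgsurj hfexact hfsurj
    hfinj hginj

/-- canonical free module covering `N` -/
def FreeMod (R : Type u) [CommRing R] (N : Type u) : Type u := N →₀ R

instance (R : Type u) [CommRing R] (N : Type u) : AddCommGroup (FreeMod R N) :=
  inferInstanceAs (AddCommGroup (N →₀ R))

instance (R : Type u) [CommRing R] (N : Type u) : Module R (FreeMod R N) :=
  inferInstanceAs (Module R (N →₀ R))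

instance (R : Type u) [CommRing R] (N : Type u) : Module.Free R (FreeMod R N) :=
  inferInstanceAs (Module.Free R (N →₀ R))

/-- canonical free cover -/
def cov (R : Type u) [CommRing R] (N : Type u) [AddCommGroup N] [Module R N] :
    FreeMod R N →ₗ[R] N := Finsupp.linearCombination R (id : N → N)

theorem cov_surj (R : Type u) [CommRing R] (N : Type u) [AddCommGroup N] [Module R N] :
    Function.Surjective (cov R N) := Finsupp.linearCombination_id_surjective R N

/-- canonical syzygy -/
abbrev Syz (R : Type u) [CommRing R] (N : Type u) [AddCommGroup N] [Module R N] : Type u :=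
  LinearMap.ker (cov R N)

/-- `TV R M i N` : vanishing of `Tor_{i+1}(M,N)`. -/
def TV (R : Type u) [CommRing R] (M : Type u) [AddCommGroup M] [Module R M] :
    ℕ → ∀ (N : Type u) [AddCommGroup N] [Module R N], Prop
  | 0, N, _, _ => Function.Injective ((LinearMap.ker (cov R N)).subtype.lTensor M)
  | n+1, N, _, _ => TV R M n (Syz R N)

section
variable {R : Type u} [CommRing R] {A B C M N : Type u}
    [AddCommGroup A] [Module R A] [AddCommGroup B] [Module R B] [AddCommGroup C] [Module R C]
    [AddCommGroup M] [Module R M] [AddCommGroup N] [Module R N]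

theorem ex_cov : Function.Exact (LinearMap.ker (cov R N)).subtype (cov R N) :=
  LinearMap.exact_subtype_ker_map _

/-- short exact sequence -/
structure SES (f : A →ₗ[R] B) (g : B →ₗ[R] C) : Prop where
  inj : Function.Injective f
  ex : Function.Exact f g
  surj : Function.Surjective g

theorem ses_cov (R : Type u) [CommRing R] (N : Type u) [AddCommGroup N] [Module R N] :
    SES (LinearMap.ker (cov R N)).subtype (cov R N) :=
  ⟨Subtype.val_injective, ex_cov, cov_surj R N⟩

theorem ses_ker {f : A →ₗ[R] B} (hf : Function.Surjective f) :
    SES (LinearMap.ker f).subtype f :=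
  ⟨Subtype.val_injective, LinearMap.exact_subtype_ker_map _, hf⟩

theorem TV.flat [Module.Flat R M] (i : ℕ) : TV R M i N := by
  induction i generalizing N with
  | zero => exact Module.Flat.lTensor_preserves_injective_linearMap _ Subtype.val_injective
  | succ n ih => exact ih

/-- fact L forward -/
theorem TV.inj {f : A →ₗ[R] B} {g : B →ₗ[R] C} (h : SES f g) (hC : TV R C 0 N) :
    Function.Injective (f.rTensor N) :=
  rTensor_inj_of_lTensor_inj' h.ex h.surj ex_cov (cov_surj R N) hC
    (Module.Flat.rTensor_preserves_injective_linearMap _ h.inj)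

theorem TV.of_inj {f : A →ₗ[R] B} {g : B →ₗ[R] C} (h : SES f g)
    (hi : Function.Injective (f.rTensor N)) (hB : TV R B 0 N) : TV R C 0 N :=
  lTensor_injective_of_exact_of_exact_of_rTensor_injective h.ex h.surj ex_cov (cov_surj R N) hi hB

theorem TV.mid {f : A →ₗ[R] B} {g : B →ₗ[R] C} (h : SES f g) (i : ℕ)
    (hA : TV R A i N) (hC : TV R C i N) : TV R B i N := by
  induction i generalizing N with
  | succ n ih => exact ih hA hC
  | zero =>
    set k := (LinearMap.ker (cov R N)).subtype
    have hA' : Function.Injective (k.lTensor A) := hA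
    have hC' : Function.Injective (k.lTensor C) := hC
    change Function.Injective (k.lTensor B)
    rw [injective_iff_map_eq_zero]
    intro x hx
    have h1 : k.lTensor C (g.rTensor _ x) = 0 := by
      rw [← LinearMap.comp_apply, LinearMap.lTensor_comp_rTensor, ← LinearMap.rTensor_comp_lTensor,
        LinearMap.comp_apply, hx, map_zero]
    have h2 : g.rTensor _ x = 0 := hC' (by rw [h1, map_zero])
    obtain ⟨y, rfl⟩ := (rTensor_exact _ h.ex h.surj _).mp h2
    have h3 : f.rTensor _ (k.lTensor A y) = 0 := by
      rw [← hx, ← LinearMap.comp_apply, ← LinearMap.comp_apply, LinearMap.lTensor_comp_rTensor,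
        LinearMap.rTensor_comp_lTensor]
    have h4 : k.lTensor A y = 0 :=
      (Module.Flat.rTensor_preserves_injective_linearMap _ h.inj) (by rw [h3, map_zero])
    have h5 : y = 0 := hA' (by rw [h4, map_zero])
    rw [h5, map_zero]

theorem TV.left {f : A →ₗ[R] B} {g : B →ₗ[R] C} (h : SES f g) (i : ℕ)
    (hC : TV R C (i+1) N) (hB : TV R B i N) : TV R A i N := by
  induction i generalizing N with
  | succ n ih => exact ih hC hB
  | zero =>
    set k := (LinearMap.ker (cov R N)).subtype with hk
    have h1 : Function.Injective (f.rTensor (Syz R N)) := TV.inj h hC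
    have hB' : Function.Injective (k.lTensor B) := hB
    change Function.Injective (k.lTensor A)
    have h2 : Function.Injective ((k.lTensor B) ∘ₗ (f.rTensor (Syz R N))) := hB'.comp h1
    rw [LinearMap.lTensor_comp_rTensor, ← LinearMap.rTensor_comp_lTensor] at h2
    exact Function.Injective.of_comp (f := f.rTensor _) h2

theorem TV.right {f : A →ₗ[R] B} {g : B →ₗ[R] C} (h : SES f g) (i : ℕ)
    (hB : TV R B (i+1) N) (hA : TV R A i N) : TV R C (i+1) N := by
  induction i generalizing N with
  | succ n ih => exact ih hB hA
  | zero =>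
    set k := (LinearMap.ker (cov R N)).subtype with hk
    have hA' : Function.Injective (k.lTensor A) := hA
    refine TV.of_inj (N := Syz R N) h ?_ hB
    have h1 : Function.Injective (f.rTensor (FreeMod R N)) :=
      (Module.Flat.rTensor_preserves_injective_linearMap _ h.inj)
    have h2 : Function.Injective (f.rTensor (FreeMod R N) ∘ₗ k.lTensor A) := h1.comp hA'
    rw [LinearMap.rTensor_comp_lTensor, ← LinearMap.lTensor_comp_rTensor] at h2
    exact Function.Injective.of_comp (f := k.lTensor B) h2

/-- first-variable dimension shift -/
theorem TV.shift {f : A →ₗ[R] B} {g : B →ₗ[R] C} (h : SES f g) [Module.Flat R B] (i : ℕ) :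
    TV R C (i+1) N ↔ TV R A i N :=
  ⟨fun hC => TV.left h i hC (TV.flat i), fun hA => TV.right h i (TV.flat _) hA⟩

theorem TV.zero_iff {f : A →ₗ[R] B} {g : B →ₗ[R] C} (h : SES f g) [Module.Flat R B] :
    TV R C 0 N ↔ Function.Injective (f.rTensor N) :=
  ⟨TV.inj h, fun hi => TV.of_inj h hi (TV.flat _)⟩

theorem TV.symm_iff (i : ℕ) : TV R M i N ↔ TV R N i M := by
  induction i generalizing M with
  | zero =>
    rw [TV.zero_iff (ses_cov R M), ← LinearMap.lTensor_inj_iff_rTensor_inj]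
    rfl
  | succ n ih => rw [TV.shift (ses_cov R M), ih]; rfl

theorem TV.symm {i : ℕ} (h : TV R M i N) : TV R N i M := (TV.symm_iff i).mp h

theorem TV.flat' [Module.Flat R N] (i : ℕ) : TV R M i N := (TV.flat i).symm

theorem TV.shift' {f : A →ₗ[R] B} {g : B →ₗ[R] C} (h : SES f g) [Module.Flat R B] (i : ℕ) :
    TV R N (i+1) C ↔ TV R N i A := by
  rw [TV.symm_iff, TV.shift h, TV.symm_iff]

theorem TV.zero_iff' {f : A →ₗ[R] B} {g : B →ₗ[R] C} (h : SES f g) [Module.Flat R B] :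
    TV R N 0 C ↔ Function.Injective (f.lTensor N) := by
  rw [TV.symm_iff, TV.zero_iff h, LinearMap.lTensor_inj_iff_rTensor_inj]

theorem TV.congr (e : A ≃ₗ[R] B) {i : ℕ} (h : TV R A i N) : TV R B i N := by
  have : SES (e : A →ₗ[R] B) (0 : B →ₗ[R] PUnit.{u+1}) :=
    ⟨e.injective, fun y => by simp, fun x => ⟨0, Subsingleton.elim _ _⟩⟩
  exact TV.mid this i h (TV.flat i)

theorem TV.congr' (e : A ≃ₗ[R] B) {i : ℕ} (h : TV R N i A) : TV R N i B :=
  (TV.congr e h.symm).symm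

end

section basechange
open TensorProduct

variable {Q S : Type u} [CommRing Q] [CommRing S] [Algebra Q S]

theorem TV.baseChange {K N : Type u} [AddCommGroup K] [Module Q K] [AddCommGroup N] [Module Q N]
    [Module S N] [IsScalarTower Q S N] (hK : ∀ j, TV Q K j S) (i : ℕ) :
    TV Q K i N ↔ TV S (S ⊗[Q] K) i N := by
  have key : ∀ (K : Type u) [AddCommGroup K] [Module Q K], TV Q K 0 S →
      SES ((LinearMap.ker (cov Q K)).subtype.baseChange S) ((cov Q K).baseChange S) := by
    intro K _ _ hK
    have h1 := (TV.zero_iff (ses_cov Q K)).mp hK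
    rw [← LinearMap.lTensor_inj_iff_rTensor_inj] at h1
    exact ⟨h1, lTensor_exact _ (ses_cov Q K).ex (ses_cov Q K).surj,
      LinearMap.lTensor_surjective _ (ses_cov Q K).surj⟩
  induction i generalizing K with
  | zero =>
    rw [TV.zero_iff (ses_cov Q K), TV.zero_iff (key K (hK 0)),
      ← LinearMap.lTensor_inj_iff_rTensor_inj, ← LinearMap.lTensor_inj_iff_rTensor_inj]
    set k := (LinearMap.ker (cov Q K)).subtype
    let e1 := AlgebraTensorModule.cancelBaseChange Q S S N (LinearMap.ker (cov Q K))
    let e2 := AlgebraTensorModule.cancelBaseChange Q S S N (FreeMod Q K)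
    have hc : ∀ x, e2 ((k.baseChange S).lTensor N x) = k.lTensor N (e1 x) := by
      intro x
      induction x with
      | zero => simp
      | add x y hx hy => simp [hx, hy]
      | tmul n y =>
        induction y with
        | zero => simp
        | add x y hx hy => simp only [tmul_add, map_add, hx, hy]
        | tmul s y => simp [e1, e2]
    constructor
    · intro h
      have : Function.Injective (e2 ∘ ((k.baseChange S).lTensor N)) := by
        have h2 : e2 ∘ ((k.baseChange S).lTensor N) = k.lTensor N ∘ e1 := funext hc
        rw [h2]; exact h.comp e1.injective
      exact Function.Injective.of_comp this
    · intro h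
      have : Function.Injective (k.lTensor N ∘ e1) := by
        have h2 : e2 ∘ ((k.baseChange S).lTensor N) = k.lTensor N ∘ e1 := funext hc
        rw [← h2]; exact e2.injective.comp h
      exact (Function.Injective.of_comp_iff' _ e1.bijective).mp this
  | succ n ih =>
    rw [TV.shift (ses_cov Q K), TV.shift (key K (hK 0))]
    exact ih (fun j => (TV.shift (ses_cov Q K) j).mp (hK (j+1)))

theorem TV.faithfullyFlat [Module.FaithfullyFlat Q S] {M N : Type u} [AddCommGroup M] [Module Q M]
    [AddCommGroup N] [Module Q N] (i : ℕ) : TV Q M i N ↔ TV Q M i (S ⊗[Q] N) := by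
  induction i generalizing M with
  | zero =>
    rw [TV.zero_iff (ses_cov Q M), TV.zero_iff (ses_cov Q M),
      ← LinearMap.lTensor_inj_iff_rTensor_inj, ← LinearMap.lTensor_inj_iff_rTensor_inj]
    set k := (LinearMap.ker (cov Q M)).subtype
    rw [← Module.FaithfullyFlat.lTensor_injective_iff_injective Q S]
    let e1 := TensorProduct.assoc Q S N (LinearMap.ker (cov Q M))
    let e2 := TensorProduct.assoc Q S N (FreeMod Q M)
    have h2 : e2 ∘ (k.lTensor (S ⊗[Q] N)) = (k.lTensor N).lTensor S ∘ e1 := by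
      have : e2.toLinearMap ∘ₗ (k.lTensor (S ⊗[Q] N)) = (k.lTensor N).lTensor S ∘ₗ e1.toLinearMap := by
        ext; rfl
      exact congrArg DFunLike.coe this
    constructor
    · intro h
      have : Function.Injective (e2 ∘ (k.lTensor (S ⊗[Q] N))) := by
        rw [h2]; exact h.comp e1.injective
      exact Function.Injective.of_comp this
    · intro h
      have : Function.Injective ((k.lTensor N).lTensor S ∘ e1) := by
        rw [← h2]; exact e2.injective.comp h
      exact (Function.Injective.of_comp_iff' _ e1.bijective).mp this
  | succ n ih =>
    rw [TV.shift (ses_cov Q M), TV.shift (ses_cov Q M)]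
    exact ih

theorem TV.faithfullyFlat_iff [Module.FaithfullyFlat Q S] {M N : Type u} [AddCommGroup M]
    [Module Q M] [AddCommGroup N] [Module Q N] (i : ℕ) :
    TV Q M i N ↔ TV S (S ⊗[Q] M) i (S ⊗[Q] N) := by
  rw [TV.faithfullyFlat (S := S), TV.baseChange (S := S) (fun j => TV.flat' j)]

end basechange

section step
open TensorProduct

theorem freeMod_reg {Q : Type u} [CommRing Q] {f : Q} (hf : IsSMulRegular Q f) {M : Type u} : IsSMulRegular (FreeMod Q M) f := by
  intro x y hxy
  apply Finsupp.ext
  intro m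
  exact hf (DFunLike.congr_fun (F := M →₀ Q) hxy m)

theorem ex_quot {Q R : Type u} [CommRing Q] [CommRing R] [Algebra Q R] {f : Q}
    (hs : Function.Surjective (algebraMap Q R))
    (hker : RingHom.ker (algebraMap Q R) = Ideal.span {f}) : Function.Exact (LinearMap.lsmul Q Q f) (Algebra.linearMap Q R) := by
  intro y
  have : (Algebra.linearMap Q R) y = 0 ↔ y ∈ RingHom.ker (algebraMap Q R) := Iff.rfl
  rw [this, hker, Ideal.mem_span_singleton']
  constructor
  · rintro ⟨a, rfl⟩; exact ⟨a, by simp [mul_comm]⟩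
  · rintro ⟨a, rfl⟩; exact ⟨a, by simp [mul_comm]⟩

theorem ses_quot {Q R : Type u} [CommRing Q] [CommRing R] [Algebra Q R] {f : Q}
    (hf : IsSMulRegular Q f)
    (hs : Function.Surjective (algebraMap Q R))
    (hker : RingHom.ker (algebraMap Q R) = Ideal.span {f}) : SES (LinearMap.lsmul Q Q f) (Algebra.linearMap Q R) :=
  ⟨hf, ex_quot hs hker, hs⟩

theorem TV.quot {Q R : Type u} [CommRing Q] [CommRing R] [Algebra Q R] {f : Q}
    (hf : IsSMulRegular Q f)
    (hs : Function.Surjective (algebraMap Q R))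
    (hker : RingHom.ker (algebraMap Q R) = Ideal.span {f})
    {K : Type u} [AddCommGroup K] [Module Q K] (hK : IsSMulRegular K f) (j : ℕ) :
    TV Q K j R := by
  cases j with
  | succ j => rw [TV.shift' (ses_quot hf hs hker)]; exact TV.flat' j
  | zero =>
    rw [TV.zero_iff' (ses_quot hf hs hker)]
    have h2 : ∀ x, TensorProduct.rid Q K ((LinearMap.lsmul Q Q f).lTensor K x)
        = f • TensorProduct.rid Q K x := by
      intro x
      induction x with
      | zero => simp
      | add x y hx hy => simp [hx, hy]
      | tmul a b => simp [mul_smul]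
    intro x y hxy
    apply (TensorProduct.rid Q K).injective
    apply hK
    change f • _ = f • _
    rw [← h2, ← h2, hxy]

theorem tmul_eq_zero_iff' {Q R : Type u} [CommRing Q] [CommRing R] [Algebra Q R] {f : Q}
    (hs : Function.Surjective (algebraMap Q R))
    (hker : RingHom.ker (algebraMap Q R) = Ideal.span {f})
    {K : Type u} [AddCommGroup K] [Module Q K] (x : K) :
    (1 : R) ⊗ₜ[Q] x = 0 ↔ ∃ y : K, f • y = x := by
  have h := rTensor_exact K (ex_quot hs hker) hs (1 ⊗ₜ x)
  simp only [LinearMap.rTensor_tmul, Algebra.linearMap_apply, map_one] at h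
  rw [h]
  constructor
  · rintro ⟨y, hy⟩
    refine ⟨TensorProduct.lid Q K y, ?_⟩
    have h2 : ∀ x, TensorProduct.lid Q K ((LinearMap.lsmul Q Q f).rTensor K x)
        = f • TensorProduct.lid Q K x := by
      intro x
      induction x with
      | zero => simp
      | add x y hx hy => simp [hx, hy]
      | tmul a b => simp [mul_smul]
    rw [← h2, hy]; simp
  · rintro ⟨y, rfl⟩
    exact ⟨1 ⊗ₜ y, by simp [TensorProduct.smul_tmul']⟩

theorem exists_one_tmul {Q R : Type u} [CommRing Q] [CommRing R] [Algebra Q R]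
    (hs : Function.Surjective (algebraMap Q R))
    {K : Type u} [AddCommGroup K] [Module Q K] (x : R ⊗[Q] K) :
    ∃ y : K, 1 ⊗ₜ y = x := by
  obtain ⟨y, hy⟩ := LinearMap.rTensor_surjective K (g := Algebra.linearMap Q R) hs x
  refine ⟨TensorProduct.lid Q K y, ?_⟩
  rw [← hy]
  clear hy
  induction y with
  | zero => simp
  | add x y hx hy => simp only [map_add, tmul_add, hx, hy]
  | tmul a b =>
    simp only [TensorProduct.lid_tmul, LinearMap.rTensor_tmul, Algebra.linearMap_apply]
    rw [← TensorProduct.smul_tmul, Algebra.smul_def, mul_one]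

/-- The exact sequence `0 → M → R ⊗ K → Z → 0` with `Z` an `R`-syzygy of `M`. -/
theorem step_ses {Q R : Type u} [CommRing Q] [CommRing R] [Algebra Q R] {f : Q}
    (hf : IsSMulRegular Q f)
    (hs : Function.Surjective (algebraMap Q R))
    (hker : RingHom.ker (algebraMap Q R) = Ideal.span {f})
    {M : Type u} [AddCommGroup M] [Module Q M] [Module R M] [IsScalarTower Q R M]  :
    ∃ (Z : Type u) (_ : AddCommGroup Z) (_ : Module R Z)
      (a : M →ₗ[R] R ⊗[Q] (Syz Q M)) (b : R ⊗[Q] (Syz Q M) →ₗ[R] Z)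
      (c : Z →ₗ[R] R ⊗[Q] (FreeMod Q M)) (d : R ⊗[Q] (FreeMod Q M) →ₗ[R] M),
      SES a b ∧ SES c d := by
  set K := Syz Q M
  set G := FreeMod Q M
  let k : K →ₗ[Q] G := (LinearMap.ker (cov Q M)).subtype
  have hGreg : IsSMulRegular G f := freeMod_reg hf
  let kb : R ⊗[Q] K →ₗ[R] R ⊗[Q] G := k.baseChange R
  let d : R ⊗[Q] G →ₗ[R] M := (LinearMap.liftBaseChange R (cov Q M))
  have hd1 : ∀ g : G, d (1 ⊗ₜ g) = cov Q M g := by intro g; simp [d]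
  have hds : Function.Surjective d := by
    intro m; obtain ⟨g, rfl⟩ := cov_surj Q M m; exact ⟨1 ⊗ₜ g, hd1 g⟩
  have hfM : ∀ m : M, f • m = 0 := by
    intro m
    have : algebraMap Q R f = 0 := by
      change f ∈ RingHom.ker (algebraMap Q R); rw [hker]; exact Ideal.mem_span_singleton_self f
    rw [← algebraMap_smul R f m, this, zero_smul]
  have hex : Function.Exact kb d := by
    intro y
    obtain ⟨g, rfl⟩ := exists_one_tmul hs y
    rw [hd1]
    constructor
    · intro h; exact ⟨1 ⊗ₜ ⟨g, h⟩, rfl⟩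
    · rintro ⟨x, hx⟩
      obtain ⟨x, rfl⟩ := exists_one_tmul hs x
      rw [← hd1, ← hx]
      simp only [kb, LinearMap.baseChange_tmul, hd1]
      exact x.2
  -- the map G → K, g ↦ f g
  let s : G →ₗ[Q] K := LinearMap.codRestrict _ (LinearMap.lsmul Q G f) (by
    intro g; simp [hfM])
  let t : G →ₗ[Q] R ⊗[Q] K := (TensorProduct.mk Q R K 1) ∘ₗ s
  have ht : ∀ g, t g = 0 ↔ cov Q M g = 0 := by
    intro g
    have : t g = 1 ⊗ₜ s g := rfl
    rw [this, tmul_eq_zero_iff' hs hker]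
    constructor
    · rintro ⟨y, hy⟩
      have h1 : f • (y : G) = f • g := congrArg Subtype.val hy
      rw [← hGreg h1]; exact y.2
    · intro h; exact ⟨⟨g, h⟩, rfl⟩
  have htk : LinearMap.ker (cov Q M) ≤ LinearMap.ker t := by
    intro g hg; exact (ht g).mpr hg
  let a0 : M →ₗ[Q] R ⊗[Q] K := (Submodule.liftQ _ t htk) ∘ₗ
    ((cov Q M).quotKerEquivOfSurjective (cov_surj Q M)).symm.toLinearMap
  have ha0 : ∀ g, a0 (cov Q M g) = t g := by
    intro g
    have : ((cov Q M).quotKerEquivOfSurjective (cov_surj Q M)).symm (cov Q M g)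
      = Submodule.Quotient.mk g := by
      rw [LinearEquiv.symm_apply_eq]; rfl
    simp only [a0, LinearMap.comp_apply, LinearEquiv.coe_coe]
    rw [this]; rfl
  let a : M →ₗ[R] R ⊗[Q] K := LinearMap.extendScalarsOfSurjective hs a0
  have ha : ∀ g, a (cov Q M g) = t g := ha0
  have hainj : Function.Injective a := by
    rw [injective_iff_map_eq_zero]
    intro m hm
    obtain ⟨g, rfl⟩ := cov_surj Q M m
    rw [ha, ht] at hm; exact hm
  have haex : Function.Exact a kb := by
    intro y
    obtain ⟨x, rfl⟩ := exists_one_tmul hs y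
    simp only [kb, LinearMap.baseChange_tmul]
    rw [tmul_eq_zero_iff' hs hker]
    constructor
    · rintro ⟨g, hg⟩
      refine ⟨cov Q M g, ?_⟩
      rw [ha]
      change (1:R) ⊗ₜ s g = _
      congr 1
      exact Subtype.ext hg
    · rintro ⟨m, hm⟩
      obtain ⟨g, rfl⟩ := cov_surj Q M m
      rw [ha] at hm
      have h0 : (1:R) ⊗ₜ[Q] (s g - x) = 0 := by
        rw [tmul_sub, sub_eq_zero]; exact hm
      obtain ⟨y, hy⟩ := (tmul_eq_zero_iff' hs hker _).mp h0
      have h1 : f • (y : G) = f • g - x := congrArg Subtype.val hy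
      refine ⟨g - y, ?_⟩
      rw [smul_sub, h1]; simp [k]; rfl
  have haex' : Function.Exact a kb.rangeRestrict := by
    intro y
    rw [← haex y]
    exact Subtype.ext_iff
  refine ⟨LinearMap.range kb, inferInstance, inferInstance, a, kb.rangeRestrict,
    (LinearMap.range kb).subtype, d, ⟨hainj, haex', LinearMap.surjective_rangeRestrict _⟩,
    ⟨Subtype.val_injective, ?_, hds⟩⟩
  intro y
  rw [hex y]
  simp

theorem step_aux {Q R : Type u} [CommRing Q] [CommRing R] [Algebra Q R] {f : Q}
    (hf : IsSMulRegular Q f)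
    (hs : Function.Surjective (algebraMap Q R))
    (hker : RingHom.ker (algebraMap Q R) = Ideal.span {f})
    {M N : Type u} [AddCommGroup M] [Module Q M] [Module R M] [IsScalarTower Q R M]
    [AddCommGroup N] [Module Q N] [Module R N] [IsScalarTower Q R N] (i : ℕ) :
    (TV R M i N → TV R M (i+1) N → TV Q M (i+1) N) ∧
    (TV Q M (i+1) N → TV R M (i+2) N → TV R M i N) := by
  obtain ⟨Z, _, _, a, b, c, d, h1, h2⟩ := step_ses (M := M) hf hs hker
  have hreg : IsSMulRegular (Syz Q M) f := by
    have hGreg : IsSMulRegular (FreeMod Q M) f := freeMod_reg hf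
    intro x y hxy
    exact Subtype.ext (hGreg (congrArg Subtype.val hxy))
  have hb : TV Q M (i+1) N ↔ TV R (R ⊗[Q] Syz Q M) i N := by
    rw [TV.shift (ses_cov Q M), TV.baseChange (S := R) (TV.quot hf hs hker hreg)]
  have hZ : ∀ j, TV R M (j+1) N ↔ TV R Z j N := fun j => TV.shift h2 j
  constructor
  · intro hM hM'
    rw [hb]
    exact TV.mid h1 i hM ((hZ i).mp hM')
  · intro hQ hM
    exact TV.left h1 i ((hZ _).mp hM) (hb.mp hQ)

theorem step_a {Q R : Type u} [CommRing Q] [CommRing R] [Algebra Q R] {f : Q}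
    (hf : IsSMulRegular Q f)
    (hs : Function.Surjective (algebraMap Q R))
    (hker : RingHom.ker (algebraMap Q R) = Ideal.span {f})
    {M N : Type u} [AddCommGroup M] [Module Q M] [Module R M] [IsScalarTower Q R M]
    [AddCommGroup N] [Module Q N] [Module R N] [IsScalarTower Q R N] 
    (h : ∃ n0, ∀ i ≥ n0, TV R M i N) : ∃ n0, ∀ i ≥ n0, TV Q M i N := by
  obtain ⟨n0, h⟩ := h
  refine ⟨n0+1, fun i hi => ?_⟩
  obtain ⟨j, rfl⟩ : ∃ j, i = j+1 := ⟨i-1, by omega⟩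
  exact (step_aux hf hs hker j).1 (h j (by omega)) (h (j+1) (by omega))

theorem step_b {Q R : Type u} [CommRing Q] [CommRing R] [Algebra Q R] {f : Q}
    (hf : IsSMulRegular Q f)
    (hs : Function.Surjective (algebraMap Q R))
    (hker : RingHom.ker (algebraMap Q R) = Ideal.span {f})
    {M N : Type u} [AddCommGroup M] [Module Q M] [Module R M] [IsScalarTower Q R M]
    [AddCommGroup N] [Module Q N] [Module R N] [IsScalarTower Q R N] (e : ℕ)
    (hQ : ∀ i ≥ e + 1, TV Q M i N)
    (h : ∃ n0, ∀ i ≥ n0, TV R M i N) : ∀ i ≥ e, TV R M i N := by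
  obtain ⟨n0, h⟩ := h
  have : ∀ k i, i ≥ e → i + 2 * k ≥ n0 → TV R M i N := by
    intro k
    induction k with
    | zero => intro i _ h2; exact h i (by omega)
    | succ k ih =>
      intro i h1 h2
      exact (step_aux hf hs hker i).2 (hQ (i+1) (by omega)) (ih (i+2) (by omega) (by omega))
  intro i hi
  exact this n0 i hi (by omega)

end step

section listind
open TensorProduct

theorem TV.of_bijective {Q S : Type u} [CommRing Q] [CommRing S] [Algebra Q S]
    (hb : Function.Bijective (algebraMap Q S))
    {M N : Type u} [AddCommGroup M] [Module Q M] [Module S M] [IsScalarTower Q S M]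
    [AddCommGroup N] [Module Q N] [Module S N] [IsScalarTower Q S N] (i : ℕ) :
    TV Q M i N ↔ TV S M i N := by
  let eQS : Q ≃ₗ[Q] S := LinearEquiv.ofBijective (Algebra.linearMap Q S) hb
  have hfl : Module.Flat Q S := Module.Flat.of_linearEquiv eQS.symm
  rw [TV.baseChange (S := S) (fun j => TV.flat' j)]
  let φ : S ⊗[Q] M →ₗ[S] M := LinearMap.liftBaseChange S LinearMap.id
  have hφ : ∀ m : M, φ (1 ⊗ₜ m) = m := by intro m; simp [φ]
  have hφb : Function.Bijective φ := by
    constructor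
    · rw [injective_iff_map_eq_zero]
      intro x hx
      obtain ⟨y, rfl⟩ := exists_one_tmul hb.2 x
      rw [hφ] at hx; rw [hx, tmul_zero]
    · intro m; exact ⟨_, hφ m⟩
  exact ⟨fun h => TV.congr (LinearEquiv.ofBijective φ hφb) h,
    fun h => TV.congr (LinearEquiv.ofBijective φ hφb).symm h⟩

theorem isWeaklyRegular_quot {Q : Type u} [CommRing Q] {f : Q} {rs : List Q}
    (h : IsWeaklyRegular Q (f :: rs)) :
    IsWeaklyRegular (Q ⧸ Ideal.span {f}) (rs.map (algebraMap Q (Q ⧸ Ideal.span {f}))) := by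
  rw [isWeaklyRegular_map_algebraMap_iff]
  have h2 := ((isWeaklyRegular_cons_iff Q f rs).mp h).2
  have e : QuotSMulTop f Q ≃ₗ[Q] (Q ⧸ Ideal.span {f}) :=
    Submodule.quotEquivOfEq _ _ (by
      ext x; simp [Submodule.mem_smul_pointwise_iff_exists, Ideal.mem_span_singleton', mul_comm])
  exact (LinearEquiv.isWeaklyRegular_congr e rs).mp h2


theorem TV.list (n : ℕ) : ∀ {Q S : Type u} [CommRing Q] [CommRing S] [Algebra Q S] (rs : List Q)
    (_ : rs.length = n)
    (_ : IsWeaklyRegular Q rs) (_ : Function.Surjective (algebraMap Q S))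
    (_ : RingHom.ker (algebraMap Q S) = Ideal.ofList rs)
    {M N : Type u} [AddCommGroup M] [Module Q M] [Module S M] [IsScalarTower Q S M]
    [AddCommGroup N] [Module Q N] [Module S N] [IsScalarTower Q S N]
    (_ : ∃ n0, ∀ i ≥ n0, TV S M i N),
    (∃ n0, ∀ i ≥ n0, TV Q M i N) ∧
    (∀ e, (∀ i ≥ e + n, TV Q M i N) → ∀ i ≥ e, TV S M i N) := by
  induction n with
  | zero =>
    intro Q S _ _ _ rs hlen hreg hs hker M N _ _ _ _ _ _ _ _ hev
    rw [List.length_eq_zero_iff] at hlen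
    subst hlen
    have hb : Function.Bijective (algebraMap Q S) := by
      refine ⟨?_, hs⟩
      rw [RingHom.injective_iff_ker_eq_bot, hker, Ideal.ofList_nil]
    simp only [TV.of_bijective hb (M := M) (N := N)]
    exact ⟨hev, fun e h => h⟩
  | succ n ih =>
    intro Q S _ _ _ rs hlen hreg hs hker M N _ _ _ _ _ _ _ _ hev
    obtain ⟨f, rs, rfl⟩ := List.exists_cons_of_length_eq_add_one hlen
    have hlen' : rs.length = n := by simpa using hlen
    have hf : IsSMulRegular Q f := ((isWeaklyRegular_cons_iff Q f rs).mp hreg).1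
    have hreg' := isWeaklyRegular_quot hreg
    set Q1 := Q ⧸ Ideal.span {f}
    have hs1 : Function.Surjective (algebraMap Q Q1) := Ideal.Quotient.mk_surjective
    have hker1 : RingHom.ker (algebraMap Q Q1) = Ideal.span {f} := Ideal.mk_ker
    have hle : ∀ a ∈ Ideal.span {f}, algebraMap Q S a = 0 := by
      intro a ha
      change a ∈ RingHom.ker (algebraMap Q S)
      rw [hker, Ideal.ofList_cons]
      exact Ideal.mem_sup_left ha
    let φ : Q1 →+* S := Ideal.Quotient.lift _ (algebraMap Q S) hle
    let : Algebra Q1 S := φ.toAlgebra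
    have hφ : ∀ q : Q, algebraMap Q1 S (algebraMap Q Q1 q) = algebraMap Q S q := fun q => rfl
    let : Module Q1 M := Module.compHom M φ
    let : Module Q1 N := Module.compHom N φ
    have : IsScalarTower Q1 S M := ⟨fun a b m => by
      rw [Algebra.smul_def, mul_smul]; rfl⟩
    have : IsScalarTower Q1 S N := ⟨fun a b m => by
      rw [Algebra.smul_def, mul_smul]; rfl⟩
    have : IsScalarTower Q Q1 M := ⟨fun a b m => by
      rw [Algebra.smul_def, mul_smul, ← algebraMap_smul S a (b • m)]; rfl⟩
    have : IsScalarTower Q Q1 N := ⟨fun a b m => by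
      rw [Algebra.smul_def, mul_smul, ← algebraMap_smul S a (b • m)]; rfl⟩
    have hs2 : Function.Surjective (algebraMap Q1 S) := fun s => by
      obtain ⟨q, rfl⟩ := hs s; exact ⟨algebraMap Q Q1 q, rfl⟩
    have hker2 : RingHom.ker (algebraMap Q1 S) = Ideal.ofList (rs.map (algebraMap Q Q1)) := by
      rw [← Ideal.map_ofList]
      apply le_antisymm
      · intro x hx
        obtain ⟨q, rfl⟩ := hs1 x
        have : q ∈ RingHom.ker (algebraMap Q S) := hx
        rw [hker, Ideal.ofList_cons] at this
        have h3 := Ideal.mem_map_of_mem (algebraMap Q Q1) this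
        rw [Ideal.map_sup] at h3
        have h4 : Ideal.map (algebraMap Q Q1) (Ideal.span {f}) = ⊥ := Ideal.map_quotient_self _
        rwa [h4, bot_sup_eq] at h3
      · rw [Ideal.map_le_iff_le_comap]
        intro q hq
        change q ∈ RingHom.ker (algebraMap Q S)
        rw [hker, Ideal.ofList_cons]
        exact Ideal.mem_sup_right hq
    obtain ⟨h1, h2⟩ := ih (Q := Q1) (S := S) (rs.map (algebraMap Q Q1)) (by simpa using hlen')
      hreg' hs2 hker2 (M := M) (N := N) hev
    refine ⟨step_a hf hs1 hker1 h1, fun e he => h2 e ?_⟩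
    exact step_b hf hs1 hker1 (e + n) he h1

end listind

section regbound
open TensorProduct Pointwise

theorem ses_smul {R : Type u} [CommRing R] {N : Type u} [AddCommGroup N] [Module R N] {x : R}
    (hx : IsSMulRegular N x) :
    SES (LinearMap.lsmul R N x) (Submodule.mkQ (x • (⊤ : Submodule R N))) := by
  refine ⟨hx, ?_, Submodule.mkQ_surjective _⟩
  intro y
  rw [Submodule.mkQ_apply, Submodule.Quotient.mk_eq_zero,
    Submodule.mem_smul_pointwise_iff_exists]
  simp

theorem TV.quot_list {R : Type u} [CommRing R] {M : Type u} [AddCommGroup M] [Module R M]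
    (xs : List R) : ∀ {N : Type u} [AddCommGroup N] [Module R N] (a : ℕ),
    IsWeaklyRegular N xs → (∀ i ≥ a, TV R M i N) →
    ∀ i ≥ a + xs.length, TV R M i (N ⧸ (Ideal.ofList xs • (⊤ : Submodule R N))) := by
  induction xs with
  | nil =>
    intro N _ _ a _ h i hi
    have h0 : (Ideal.ofList ([] : List R) • (⊤ : Submodule R N)) = ⊥ := by simp
    exact TV.congr' (Submodule.quotEquivOfEqBot _ h0).symm (h i (by simpa using hi))
  | cons x xs ih =>
    intro N _ _ a hreg h i hi
    rw [isWeaklyRegular_cons_iff] at hreg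
    have h1 : ∀ i ≥ a + 1, TV R M i (QuotSMulTop x N) := by
      intro i hi
      obtain ⟨j, rfl⟩ : ∃ j, i = j + 1 := ⟨i - 1, by omega⟩
      exact (TV.right (ses_smul hreg.1) j (h (j+1) (by omega)).symm (h j (by omega)).symm).symm
    have h2 := ih (a + 1) hreg.2 h1 i (by simp only [List.length_cons] at hi; omega)
    exact TV.congr' (Submodule.quotOfListConsSMulTopEquivQuotSMulTopInner N x xs).symm h2

theorem TV.of_quot {R : Type u} [CommRing R] {M : Type u} [AddCommGroup M] [Module R M] {y : R}
    (hy : IsSMulRegular M y) (i : ℕ) : ∀ {N : Type u} [AddCommGroup N] [Module R N],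
    (∃ t : FreeMod R N →ₗ[R] Syz R N, ∀ z : Syz R N, t (z : FreeMod R N) = y • z) →
    TV R (QuotSMulTop y M) (i + 1) N → TV R M i N := by
  induction i with
  | zero =>
    rintro N _ _ ⟨t, ht⟩ h
    have h1 : Function.Injective ((LinearMap.lsmul R M y).rTensor (Syz R N)) :=
      TV.inj (ses_smul hy) h
    change Function.Injective ((LinearMap.ker (cov R N)).subtype.lTensor M)
    have h2 : (t.lTensor M) ∘ₗ ((LinearMap.ker (cov R N)).subtype.lTensor M)
        = (LinearMap.lsmul R M y).rTensor (Syz R N) := by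
      rw [← LinearMap.lTensor_comp]
      ext m z
      have : t ((LinearMap.ker (cov R N)).subtype z) = y • z := ht z
      simp only [AlgebraTensorModule.curry_apply, LinearMap.restrictScalars_self, curry_apply,
        LinearMap.lTensor_tmul, LinearMap.comp_apply, this, LinearMap.rTensor_tmul,
        LinearMap.lsmul_apply, TensorProduct.smul_tmul]
    have h3 : Function.Injective
      ((t.lTensor M) ∘ ((LinearMap.ker (cov R N)).subtype.lTensor M)) := by
      have := h1
      rw [← h2] at this
      exact this
    exact Function.Injective.of_comp h3
  | succ i ih =>
    rintro N _ _ ⟨t, ht⟩ h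
    change TV R M i (Syz R N)
    refine ih ?_ h
    obtain ⟨t', ht'⟩ := Module.projective_lifting_property (cov R (Syz R N)) t (cov_surj R _)
    refine ⟨LinearMap.codRestrict _ (y • LinearMap.id -
      t' ∘ₗ (LinearMap.ker (cov R N)).subtype ∘ₗ cov R (Syz R N)) ?_, ?_⟩
    · intro g
      have h1 : cov R (Syz R N) (t' ((cov R (Syz R N) g : Syz R N) : FreeMod R N))
        = y • cov R (Syz R N) g := by
        rw [← ht]; exact LinearMap.congr_fun ht' _
      rw [LinearMap.mem_ker]
      simp [h1]
    · intro z
      apply Subtype.ext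
      have hz : cov R (Syz R N) (z : FreeMod R (Syz R N)) = 0 := z.2
      simp [hz]

theorem TV.of_quot' {R : Type u} [CommRing R] {M : Type u} [AddCommGroup M] [Module R M] {y : R}
    (hy : IsSMulRegular M y) (i : ℕ) {N : Type u} [AddCommGroup N] [Module R N]
    (hN : ∀ n : N, y • n = 0) 
    (h : TV R (QuotSMulTop y M) (i + 1) N) : TV R M i N := by
  refine TV.of_quot hy i ⟨LinearMap.codRestrict _ (y • LinearMap.id) ?_, ?_⟩ h
  · intro g; simp [hN]
  · intro z; rfl

theorem TV.of_regular {R : Type u} [CommRing R] {N : Type u} [AddCommGroup N] [Module R N] (n : ℕ)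
    (hn : ∀ {M : Type u} [AddCommGroup M] [Module R M], ∀ i ≥ n, TV R M i N) (ys : List R)
    (hN : ∀ y ∈ ys, ∀ n : N, y • n = 0) :
    ∀ {M : Type u} [AddCommGroup M] [Module R M], IsWeaklyRegular M ys →
    ∀ i, i + ys.length ≥ n → TV R M i N := by
  induction ys with
  | nil => intro M _ _ _ i hi; exact hn i (by simpa using hi)
  | cons y ys ih =>
    intro M _ _ hreg i hi
    rw [isWeaklyRegular_cons_iff] at hreg
    refine TV.of_quot' hreg.1 i (hN y (by simp)) ?_
    exact ih (fun y hy => hN y (by simp [hy])) hreg.2 (i+1)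
      (by simp only [List.length_cons] at hi; omega)

theorem TV.of_residue {Q : Type u} [CommRing Q] [IsLocalRing Q] [IsNoetherianRing Q] (e : ℕ) :
    ∀ {M : Type u} [AddCommGroup M] [Module Q M] [Module.Finite Q M]
    (_ : ∀ i ≥ e, TV Q M i (IsLocalRing.ResidueField Q))
    {N : Type u} [AddCommGroup N] [Module Q N], ∀ i ≥ e, TV Q M i N := by
  induction e with
  | zero =>
    intro M _ _ _ h N _ _ i _
    obtain ⟨n, f, hf⟩ := Module.Finite.exists_fin' Q M
    have h0 := (TV.zero_iff (ses_ker hf)).mp (h 0 le_rfl)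
    rw [← LinearMap.lTensor_inj_iff_rTensor_inj] at h0
    have : Module.Free Q M := Module.free_of_lTensor_residueField_injective
      (LinearMap.ker f).subtype f hf (ses_ker hf).ex h0
    exact TV.flat i
  | succ e ih =>
    intro M _ _ _ h N _ _ i hi
    obtain ⟨n, f, hf⟩ := Module.Finite.exists_fin' Q M
    obtain ⟨j, rfl⟩ : ∃ j, i = j + 1 := ⟨i - 1, by omega⟩
    rw [TV.shift (ses_ker hf)]
    refine ih (fun i hi => ?_) j (by omega)
    rw [← TV.shift (ses_ker hf)]
    exact h (i+1) (by omega)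

/-- Auslander-Buchsbaum style bound over a regular local ring. -/
theorem TV.regular_bound {Q : Type u} [CommRing Q] [IsLocalRing Q] [IsNoetherianRing Q]
    (xs : List Q) (hxs : IsWeaklyRegular Q xs)
    (hm : Ideal.ofList xs = IsLocalRing.maximalIdeal Q)
    {M N : Type u} [AddCommGroup M] [Module Q M] [Module.Finite Q M] [AddCommGroup N] [Module Q N]
    (ys : List Q) (hys : IsWeaklyRegular M ys) (hym : ∀ y ∈ ys, y ∈ IsLocalRing.maximalIdeal Q)
    (c : ℕ) (hc : xs.length ≤ c + ys.length) :
    ∀ i ≥ c, TV Q M i N := by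
  apply TV.of_residue c
  intro i hi
  refine TV.of_regular xs.length ?_ ys ?_ hys i (by omega)
  · intro M _ _ i hi
    have h1 := TV.quot_list (M := M) xs (N := Q) 0 hxs (fun i _ => TV.flat' i) i (by simpa using hi)
    have h2 : Ideal.ofList xs • (⊤ : Submodule Q Q) = IsLocalRing.maximalIdeal Q := by
      rw [hm]; simp
    exact TV.congr' (B := Q ⧸ IsLocalRing.maximalIdeal Q) (Submodule.quotEquivOfEq _ _ h2) h1
  · intro y hy n
    obtain ⟨q, rfl⟩ := IsLocalRing.residue_surjective n
    have : y • IsLocalRing.residue Q q = IsLocalRing.residue Q (y * q) := rfl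
    rw [this, IsLocalRing.residue_eq_zero_iff]
    exact Ideal.mul_mem_right _ _ (hym y hy)

end regbound

section core
open TensorProduct IsLocalRing

theorem core1 {Q S : Type u} [CommRing Q] [IsLocalRing Q] [IsNoetherianRing Q] [CommRing S]
    [Algebra Q S] (hs : Function.Surjective (algebraMap Q S))
    (xs : List Q) (hxs : IsWeaklyRegular Q xs) (hm : Ideal.ofList xs = maximalIdeal Q)
    (rs : List Q) (hrs : IsWeaklyRegular Q rs)
    (hker : RingHom.ker (algebraMap Q S) = Ideal.ofList rs)
    {M N : Type u} [AddCommGroup M] [Module Q M] [Module S M] [IsScalarTower Q S M]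
    [Module.Finite S M]
    [AddCommGroup N] [Module Q N] [Module S N] [IsScalarTower Q S N]
    (ys : List Q) (hys : IsWeaklyRegular M ys) (hym : ∀ y ∈ ys, y ∈ maximalIdeal Q)
    (hc : xs.length ≤ rs.length + ys.length)
    (hev : ∃ n0, ∀ i ≥ n0, TV S M i N) : ∀ i, TV S M i N := by
  have : Module.Finite Q S := Module.Finite.of_surjective (Algebra.linearMap Q S) hs
  have : Module.Finite Q M := Module.Finite.trans S M
  intro i
  refine (TV.list rs.length rs rfl hrs hs hker hev).2 0 ?_ i (Nat.zero_le _)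
  intro i hi
  exact TV.regular_bound xs hxs hm ys hys hym rs.length hc i (by omega)

theorem core2 {Q S : Type u} [CommRing Q] [IsLocalRing Q] [IsNoetherianRing Q] [CommRing S]
    [IsLocalRing S]
    [Algebra Q S] (hs : Function.Surjective (algebraMap Q S))
    (xs : List Q) (hxs : IsWeaklyRegular Q xs) (hm : Ideal.ofList xs = maximalIdeal Q)
    (rs : List Q) (hrs : IsWeaklyRegular Q rs)
    (hker : RingHom.ker (algebraMap Q S) = Ideal.ofList rs)
    {M N : Type u} [AddCommGroup M] [Module S M] [Module.Finite S M]
    [AddCommGroup N] [Module S N]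
    (ys : List S) (hys : IsWeaklyRegular M ys) (hym : ∀ y ∈ ys, y ∈ maximalIdeal S)
    (hc : xs.length ≤ rs.length + ys.length)
    (hev : ∃ n0, ∀ i ≥ n0, TV S M i N) : ∀ i, TV S M i N := by
  let _ : Module Q M := Module.compHom M (algebraMap Q S)
  let _ : Module Q N := Module.compHom N (algebraMap Q S)
  have : IsScalarTower Q S M := ⟨fun a b m => by rw [Algebra.smul_def, mul_smul]; rfl⟩
  have : IsScalarTower Q S N := ⟨fun a b m => by rw [Algebra.smul_def, mul_smul]; rfl⟩
  obtain ⟨zs, rfl⟩ := List.map_surjective_iff.mpr hs ys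
  rw [isWeaklyRegular_map_algebraMap_iff] at hys
  refine core1 hs xs hxs hm rs hrs hker zs hys ?_ (by simpa using hc) hev
  intro y hy
  by_contra hcon
  have hu : IsUnit y := by simpa using hcon
  have := hym (algebraMap Q S y) (List.mem_map_of_mem hy)
  rw [mem_maximalIdeal] at this
  exact this (hu.map _)

theorem dim_le {R S : Type u} [CommRing R] [CommRing S] [IsLocalRing R] [IsNoetherianRing R]
    [IsLocalRing S] [IsNoetherianRing S] [Algebra R S] [IsLocalHom (algebraMap R S)]
    (hmap : maximalIdeal S = (maximalIdeal R).map (algebraMap R S)) :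
    ringKrullDim S ≤ ringKrullDim R := by
  have hl : (maximalIdeal S).LiesOver (maximalIdeal R) := inferInstance
  have h := Ideal.height_le_height_add_of_liesOver (maximalIdeal R) (maximalIdeal S)
  rw [← hmap, Ideal.map_quotient_self] at h
  have : Nontrivial (S ⧸ maximalIdeal S) := inferInstance
  have h0 : (⊥ : Ideal (S ⧸ maximalIdeal S)).height = 0 := by
    rw [Ideal.height_bot]
  rw [h0, add_zero] at h
  rw [← IsLocalRing.maximalIdeal_height_eq_ringKrullDim,
    ← IsLocalRing.maximalIdeal_height_eq_ringKrullDim]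
  exact_mod_cast h

theorem len_le {Q S : Type u} [CommRing Q] [IsLocalRing Q] [IsNoetherianRing Q] [CommRing S]
    [Algebra Q S] (hs : Function.Surjective (algebraMap Q S))
    (xs : List Q) (hxs : IsWeaklyRegular Q xs) (hm : Ideal.ofList xs = maximalIdeal Q)
    (rs : List Q) (hrm : ∀ r ∈ rs, r ∈ maximalIdeal Q)
    (hker : RingHom.ker (algebraMap Q S) = Ideal.ofList rs) (d : ℕ)
    (hd : ringKrullDim S ≤ d) : xs.length ≤ rs.length + d := by
  classical
  have h1 : (xs.length : WithBot ℕ∞) ≤ ringKrullDim Q := by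
    have hreg : IsRegular Q xs := IsRegular.of_isWeaklyRegular_of_mem_maximalIdeal Q (by
      intro r hr; rw [← hm]; exact Ideal.subset_span hr) hxs
    rw [← ringKrullDim_add_length_eq_ringKrullDim_of_isRegular xs hreg]
    have : Nontrivial (Q ⧸ Ideal.ofList xs) := by
      rw [hm]; infer_instance
    have h0 : 0 ≤ ringKrullDim (Q ⧸ Ideal.ofList xs) := ringKrullDim_nonneg_of_nontrivial
    exact le_add_of_nonneg_left h0
  have h2 := ringKrullDim_le_ringKrullDim_quotient_add_card rs.toFinset (by
    intro r hr
    rw [IsLocalRing.ringJacobson_eq_maximalIdeal]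
    exact hrm r (by simpa using hr))
  have h3 : Ideal.span (rs.toFinset : Set Q) = RingHom.ker (algebraMap Q S) := by
    rw [hker]; simp [Ideal.ofList]
  rw [h3, ringKrullDim_eq_of_ringEquiv (RingHom.quotientKerEquivOfSurjective hs)] at h2
  have h4 : (rs.toFinset.card : WithBot ℕ∞) ≤ rs.length := by
    exact_mod_cast rs.toFinset_card_le
  have h5 : (xs.length : WithBot ℕ∞) ≤ d + rs.length :=
    h1.trans (h2.trans (add_le_add hd h4))
  have h6 : xs.length ≤ d + rs.length := by exact_mod_cast h5
  omega

theorem core3 {R S Q : Type u} [CommRing R] [CommRing S] [IsLocalRing R] [IsNoetherianRing R]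
    [IsLocalRing S] [Algebra R S] [IsLocalHom (algebraMap R S)] [Module.Flat R S]
    (hmap : maximalIdeal S = (maximalIdeal R).map (algebraMap R S))
    [CommRing Q] [IsLocalRing Q] [IsNoetherianRing Q] 
    [Algebra Q S] (hs : Function.Surjective (algebraMap Q S))
    (xs : List Q) (hxs : IsWeaklyRegular Q xs) (hm : Ideal.ofList xs = maximalIdeal Q)
    (rs : List Q) (hrs : IsWeaklyRegular Q rs) (hrm : ∀ r ∈ rs, r ∈ maximalIdeal Q)
    (hker : RingHom.ker (algebraMap Q S) = Ideal.ofList rs)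
    {M N : Type u} [AddCommGroup M] [Module R M] [Module.Finite R M]
    [AddCommGroup N] [Module R N]
    (ys : List R) (hys : IsWeaklyRegular M ys) (hym : ∀ y ∈ ys, y ∈ maximalIdeal R)
    (hd : ringKrullDim R ≤ ys.length)
    (hev : ∃ n0, ∀ i ≥ n0, TV R M i N) : ∀ i, TV R M i N := by
  have : IsNoetherianRing S := isNoetherianRing_of_surjective Q S (algebraMap Q S) hs
  have : Module.FaithfullyFlat R S := Module.FaithfullyFlat.of_flat_of_isLocalHom
  have hev' : ∃ n0, ∀ i ≥ n0, TV S (S ⊗[R] M) i (S ⊗[R] N) := by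
    obtain ⟨n0, h⟩ := hev
    exact ⟨n0, fun i hi => (TV.faithfullyFlat_iff i).mp (h i hi)⟩
  intro i
  refine (TV.faithfullyFlat_iff (S := S) i).mpr ?_
  refine core2 hs xs hxs hm rs hrs hker (ys.map (algebraMap R S))
    (hys.of_flat_of_isBaseChange (TensorProduct.isBaseChange R M S)) ?_ ?_ hev' i
  · intro y hy
    obtain ⟨z, hz, rfl⟩ := List.mem_map.mp hy
    rw [hmap]
    exact Ideal.mem_map_of_mem _ (hym z hz)
  · rw [List.length_map]
    exact len_le hs xs hxs hm rs hrm hker ys.length ((dim_le hmap).trans hd)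

end core

section torlink
open TensorProduct

theorem TV.resolution {R : Type u} [CommRing R] {M : Type u} [AddCommGroup M] [Module R M] (i : ℕ) :
    ∀ {N : Type u} [AddCommGroup N] [Module R N] (P : ℕ → Type u) [∀ n, AddCommGroup (P n)]
    [∀ n, Module R (P n)] [∀ n, Module.Flat R (P n)] (d : ∀ n, P (n+1) →ₗ[R] P n)
    (π : P 0 →ₗ[R] N) (_ : Function.Surjective π) (_ : Function.Exact (d 0) π)
    (_ : ∀ n, Function.Exact (d (n+1)) (d n)),
    TV R M i N ↔ Function.Exact ((d (i+1)).lTensor M) ((d i).lTensor M) := by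
  induction i with
  | zero =>
    intro N _ _ P _ _ _ d π hπ h0 hd
    let π' : P 1 →ₗ[R] LinearMap.ker π := LinearMap.codRestrict _ (d 0)
      (fun x => (h0 _).mpr ⟨x, rfl⟩)
    have hs : Function.Surjective π' := by
      rintro ⟨x, hx⟩
      obtain ⟨y, rfl⟩ := (h0 x).mp hx
      exact ⟨y, rfl⟩
    have hex : Function.Exact (d 1) π' := by
      intro x
      rw [← hd 0 x]
      exact Subtype.ext_iff
    have hex' := lTensor_exact M hex hs
    have hs' := LinearMap.lTensor_surjective M hs
    have hcomp : ∀ x, (LinearMap.ker π).subtype.lTensor M (π'.lTensor M x) = (d 0).lTensor M x := by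
      intro x
      rw [← LinearMap.comp_apply, ← LinearMap.lTensor_comp]
      rfl
    rw [TV.zero_iff' (ses_ker hπ)]
    constructor
    · intro h x
      rw [← hex' x, ← hcomp]
      exact ⟨fun hx => h (by rw [hx, map_zero]), fun hx => by rw [hx, map_zero]⟩
    · intro h
      rw [injective_iff_map_eq_zero]
      intro z hz
      obtain ⟨x, rfl⟩ := hs' z
      rw [hcomp] at hz
      exact (hex' x).mpr ((h x).mp hz)
  | succ i ih =>
    intro N _ _ P _ _ _ d π hπ h0 hd
    let π' : P 1 →ₗ[R] LinearMap.ker π := LinearMap.codRestrict _ (d 0)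
      (fun x => (h0 _).mpr ⟨x, rfl⟩)
    have hs : Function.Surjective π' := by
      rintro ⟨x, hx⟩
      obtain ⟨y, rfl⟩ := (h0 x).mp hx
      exact ⟨y, rfl⟩
    have hex : Function.Exact (d 1) π' := by
      intro x
      rw [← hd 0 x]
      exact Subtype.ext_iff
    rw [TV.shift' (ses_ker hπ)]
    exact ih (fun n => P (n+1)) (fun n => d (n+1)) π' hs hex (fun n => hd (n+1))

theorem TV.tor {R : Type u} [CommRing R] {M N : Type u} [AddCommGroup M] [Module R M]
    [AddCommGroup N] [Module R N] (i : ℕ) :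
    Subsingleton (((Tor (ModuleCat.{u} R) (i+1)).obj (ModuleCat.of R M)).obj (ModuleCat.of R N))
     ↔ TV R M i N := by
  obtain ⟨P⟩ := (inferInstance : HasProjectiveResolution (ModuleCat.of R N)).out
  let F := (MonoidalCategory.tensoringLeft (ModuleCat.{u} R)).obj (ModuleCat.of R M)
  have e := P.isoLeftDerivedObj F (i+1)
  have hflat : ∀ n, Module.Flat R (P.complex.X n) := fun n => by
    have := P.projective n
    have : Module.Projective R (P.complex.X n) :=
      (IsProjective.iff_projective (P.complex.X n)).mpr this
    infer_instance
  have hres := TV.resolution (M := M) (N := N) i (fun n => P.complex.X n) (fun n => (P.complex.d (n+1) n).hom)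
    (P.π.f 0).hom ((ModuleCat.epi_iff_surjective _).mp inferInstance)
    ((ShortComplex.ShortExact.moduleCat_exact_iff_function_exact _).mp P.exact₀)
    (fun n => (ShortComplex.ShortExact.moduleCat_exact_iff_function_exact _).mp (P.exact_succ n))
  rw [hres]
  have h1 : Subsingleton (((Tor (ModuleCat.{u} R) (i+1)).obj (ModuleCat.of R M)).obj
      (ModuleCat.of R N)) ↔ Limits.IsZero ((F.leftDerived (i+1)).obj (ModuleCat.of R N)) :=
    (ModuleCat.isZero_iff_subsingleton).symm
  rw [h1, e.isZero_iff]
  change Limits.IsZero (((F.mapHomologicalComplex _).obj P.complex).homology (i+1)) ↔ _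
  rw [← HomologicalComplex.exactAt_iff_isZero_homology,
    HomologicalComplex.exactAt_iff' _ (i+2) (i+1) i (by simp) (by simp),
    ShortComplex.ShortExact.moduleCat_exact_iff_function_exact]
  rfl

end torlink

theorem torM_iff {R : Type u} [CommRing R] {M N : Type u} [AddCommGroup M] [Module R M]
    [AddCommGroup N] [Module R N] (i : ℕ) :
    Subsingleton (TorM R (i+1) M N) ↔ TV R M i N := by
  unfold TorM TorModCat
  exact TV.tor i

theorem span_nonunits (A : Type u) [CommRing A] [IsLocalRing A] :
    Ideal.span (nonunits A) = IsLocalRing.maximalIdeal A :=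
  Ideal.span_eq (IsLocalRing.maximalIdeal A)

theorem exists_reg {R : Type u} [CommRing R] [IsLocalRing R] [IsNoetherianRing R]
    {M : Type u} [AddCommGroup M] [Module R M] (hMCM : IsMCM R M) :
    ∃ ys : List R, (∀ y ∈ ys, y ∈ nonunits R) ∧
      IsWeaklyRegular M ys ∧ ringKrullDim R ≤ ys.length := by
  obtain ⟨d, hd⟩ : ∃ d : ℕ, ringKrullDim R = d := by
    rw [← IsLocalRing.maximalIdeal_height_eq_ringKrullDim]
    have hfin := Ideal.height_ne_top (I := IsLocalRing.maximalIdeal R) (Ideal.IsPrime.ne_top inferInstance)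
    obtain ⟨d, hd⟩ := ENat.ne_top_iff_exists.mp hfin
    exact ⟨d, by rw [← hd]; rfl⟩
  have hdep : rdepth R M = d := by
    have h := hMCM
    unfold IsMCM at h
    rw [hd] at h
    exact_mod_cast h
  cases d with
  | zero => exact ⟨[], by simp, by simp, by rw [hd]; simp⟩
  | succ k =>
    have hlt : (k : ℕ∞) < rdepth R M := by
      rw [hdep]; exact_mod_cast Nat.lt_succ_self k
    obtain ⟨a, ⟨ys, rfl, h1, h2⟩, hlt⟩ := lt_sSup_iff.mp hlt
    refine ⟨ys, h1, h2, ?_⟩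
    rw [hd]
    have : k < ys.length := by exact_mod_cast hlt
    exact_mod_cast this

theorem core4 {R S Q : Type u} [CommRing R] [CommRing S] [IsLocalRing R] [IsNoetherianRing R]
    [IsLocalRing S] [Algebra R S] [IsLocalHom (algebraMap R S)] [Module.Flat R S]
    (hmap : IsLocalRing.maximalIdeal S = (IsLocalRing.maximalIdeal R).map (algebraMap R S))
    [CommRing Q] (hQ : IsRegLocal Q)
    (rs : List Q) (hrm : ∀ r ∈ rs, r ∈ nonunits Q) (hrs : IsWeaklyRegular Q rs)
    (e : (Q ⧸ Ideal.span {x | x ∈ rs}) ≃+* S)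
    {M N : Type u} [AddCommGroup M] [Module R M] [Module.Finite R M]
    [AddCommGroup N] [Module R N] (hMCM : IsMCM R M)
    (hev : ∃ n0, ∀ i ≥ n0, TV R M i N) : ∀ i, TV R M i N := by
  obtain ⟨hQN, hQL, xs, hxs, hxm, hspan⟩ := hQ
  rw [span_nonunits Q] at hspan
  obtain ⟨ys, hym, hys, hd⟩ := exists_reg hMCM
  let φ : Q →+* S := (e : (Q ⧸ Ideal.span {x | x ∈ rs}) →+* S).comp (Ideal.Quotient.mk _)
  let _ : Algebra Q S := φ.toAlgebra
  have hs : Function.Surjective (algebraMap Q S) :=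
    e.surjective.comp Ideal.Quotient.mk_surjective
  have hker : RingHom.ker (algebraMap Q S) = Ideal.ofList rs := by
    ext x
    change e (Ideal.Quotient.mk _ x) = 0 ↔ x ∈ Ideal.span {x | x ∈ rs}
    rw [EmbeddingLike.map_eq_zero_iff, Ideal.Quotient.eq_zero_iff_mem]
  exact core3 hmap hs xs hxs hspan rs hrs hrm hker ys hys hym hd hev

/-- Jorgensen: over a complete intersection, eventual vanishing of Tor
against a maximal Cohen-Macaulay module gives vanishing from degree 1 on. -/
theorem stmt10 (R : Type u) [CommRing R] (hR : IsCIRing R)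
    (M N : Type u) [AddCommGroup M] [Module R M] [Module.Finite R M]
    [AddCommGroup N] [Module R N] [Module.Finite R N]
    (hMCM : IsMCM R M)
    (hv : ∃ n0 : ℕ, ∀ i ≥ n0, Subsingleton (TorM R i M N)) :
    ∀ i ≥ 1, Subsingleton (TorM R i M N) := by
  obtain ⟨hN, hL, Q, _, hQ, rs, hrm, hrs, ⟨e⟩⟩ := hR
  rw [span_nonunits R] at e
  have : Module.Flat R (AdicCompletion (IsLocalRing.maximalIdeal R) R) :=
    AdicCompletion.flat_of_isNoetherian _
  have hev : ∃ n0, ∀ i ≥ n0, TV R M i N := by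
    obtain ⟨n0, h⟩ := hv
    exact ⟨n0, fun i hi => (torM_iff i).mp (h (i+1) (by omega))⟩
  intro i hi
  obtain ⟨j, rfl⟩ : ∃ j, i = j + 1 := ⟨i - 1, by omega⟩
  rw [torM_iff]
  exact core4 AdicCompletion.maximalIdeal_eq_map hQ rs hrm hrs e hMCM hev j

end
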